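/- Let f be a smooth function with f ≤ 0 on a Riemannian manifold and w = |∇f|²/(1−f)². Then Δw = 6/(1−f)⁴·|∇f|⁴ + 2/(1−f)³·(Δf)·|∇f|² + 8/(1−f)³·Hess f(∇f,∇f) + 2/(1−f)²·|Hess f|² + 2/(1−f)²·⟨∇f, ∇(Δf)⟩ + 2/(1−f)²·Ric(∇f, ∇f). -/

import Mathlib

open scoped BigOperators

/-- Partial derivative in the `i`-th coordinate direction. -/
noncomputable def pd {n : ℕ} (i : Fin n) (h : (Fin n → ℝ) → ℝ) (x : Fin n → ℝ) : ℝ :=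
  fderiv ℝ h x (Pi.single i 1)

/-- Christoffel symbols `Γ^k_{ij}` of the metric `g` (with pointwise inverse `gInv`). -/
noncomputable def christoffel {n : ℕ} (g gInv : (Fin n → ℝ) → Matrix (Fin n) (Fin n) ℝ)
    (x : Fin n → ℝ) (k i j : Fin n) : ℝ :=
  (1 / 2) * ∑ l, gInv x k l *
    (pd i (fun y => g y j l) x + pd j (fun y => g y i l) x - pd l (fun y => g y i j) x)

/-- Ricci curvature tensor `R_{ij}` in local coordinates. -/
noncomputable def ricci {n : ℕ} (g gInv : (Fin n → ℝ) → Matrix (Fin n) (Fin n) ℝ)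
    (x : Fin n → ℝ) (i j : Fin n) : ℝ :=
  (∑ k, pd k (fun y => christoffel g gInv y k i j) x)
    - (∑ k, pd j (fun y => christoffel g gInv y k k i) x)
    + (∑ k, ∑ l, christoffel g gInv x k k l * christoffel g gInv x l i j)
    - (∑ k, ∑ l, christoffel g gInv x k j l * christoffel g gInv x l k i)

/-- Hessian `f_{ij}` of a function w.r.t. the metric `g`. -/
noncomputable def hess {n : ℕ} (g gInv : (Fin n → ℝ) → Matrix (Fin n) (Fin n) ℝ)
    (h : (Fin n → ℝ) → ℝ) (x : Fin n → ℝ) (i j : Fin n) : ℝ :=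
  pd i (fun y => pd j h y) x - ∑ k, christoffel g gInv x k i j * pd k h x

/-- Laplace–Beltrami operator `Δh = g^{ij} h_{ij}`. -/
noncomputable def laplaceBeltrami {n : ℕ} (g gInv : (Fin n → ℝ) → Matrix (Fin n) (Fin n) ℝ)
    (h : (Fin n → ℝ) → ℝ) (x : Fin n → ℝ) : ℝ :=
  ∑ i, ∑ j, gInv x i j * hess g gInv h x i j

/-- Inner product of gradients `⟨∇h₁, ∇h₂⟩ = g^{ij} ∂_i h₁ ∂_j h₂`. -/
noncomputable def innerGrad {n : ℕ} (gInv : (Fin n → ℝ) → Matrix (Fin n) (Fin n) ℝ)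
    (h₁ h₂ : (Fin n → ℝ) → ℝ) (x : Fin n → ℝ) : ℝ :=
  ∑ i, ∑ j, gInv x i j * pd i h₁ x * pd j h₂ x

/-- `i`-th component of the gradient `(∇h)^i = g^{ij} ∂_j h`. -/
noncomputable def gradComp {n : ℕ} (gInv : (Fin n → ℝ) → Matrix (Fin n) (Fin n) ℝ)
    (h : (Fin n → ℝ) → ℝ) (x : Fin n → ℝ) (i : Fin n) : ℝ :=
  ∑ j, gInv x i j * pd j h x

/-!
The second derivatives of `gInv` commute, and `∂_a gInv = -(ω_a gInv + gInv ω_aᵀ)` for the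
Levi-Civita connection matrices `ω_a`; hence the curvature matrices are skew with respect to the
metric. Metric compatibility, applied twice to `|∇f|² = ⟨df, df⟩`, gives
`½ ∇_b ∇_a |∇f|² = ⟨∇_b (Hess f)_a, ∇f⟩ + ⟨(Hess f)_b, (Hess f)_a⟩`. Tracing over `a, b`, the third
covariant derivative of `f` becomes `∇(Δf)` plus a curvature term, obtained by commuting two
covariant derivatives of `df` and identified as `Ric(∇f)` by the skewness: this is the Bochner
formula for `Δ|∇f|²`. The theorem follows from the product and chain rules for `Δ`, applied to
`w = |∇f|² (1 - f)⁻²`, together with `⟨∇f, ∇|∇f|²⟩ = 2 Hess f(∇f, ∇f)`.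
-/

open scoped Matrix Topology

section PartialDerivatives

variable {n : ℕ} {h h₁ h₂ : (Fin n → ℝ) → ℝ} {x : Fin n → ℝ}

theorem contDiffAt_pd {k m : WithTop ℕ∞} (hh : ContDiffAt ℝ k h x) (hmk : m + 1 ≤ k)
    (i : Fin n) : ContDiffAt ℝ m (pd i h) x :=
  (hh.fderiv_right hmk).clm_apply contDiffAt_const

theorem contDiff_pd {k m : WithTop ℕ∞} (hh : ContDiff ℝ k h) (hmk : m + 1 ≤ k) (i : Fin n) :
    ContDiff ℝ m (pd i h) :=
  contDiff_iff_contDiffAt.2 fun _ => contDiffAt_pd hh.contDiffAt hmk i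

theorem pd_congr (hh : h₁ =ᶠ[𝓝 x] h₂) (i : Fin n) : pd i h₁ x = pd i h₂ x := by
  rw [pd, pd, hh.fderiv_eq]

theorem pd_const (c : ℝ) (i : Fin n) : pd i (fun _ => c) x = 0 := by
  simp [pd]

theorem pd_sub (hh₁ : DifferentiableAt ℝ h₁ x) (hh₂ : DifferentiableAt ℝ h₂ x) (i : Fin n) :
    pd i (fun y => h₁ y - h₂ y) x = pd i h₁ x - pd i h₂ x := by
  simp [pd, fderiv_fun_sub hh₁ hh₂]

theorem pd_add (hh₁ : DifferentiableAt ℝ h₁ x) (hh₂ : DifferentiableAt ℝ h₂ x) (i : Fin n) :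
    pd i (fun y => h₁ y + h₂ y) x = pd i h₁ x + pd i h₂ x := by
  simp [pd, fderiv_fun_add hh₁ hh₂]

theorem pd_neg (h : (Fin n → ℝ) → ℝ) (i : Fin n) : pd i (fun y => -h y) x = -pd i h x := by
  simp [pd, fderiv_fun_neg]

theorem pd_mul (hh₁ : DifferentiableAt ℝ h₁ x) (hh₂ : DifferentiableAt ℝ h₂ x) (i : Fin n) :
    pd i (fun y => h₁ y * h₂ y) x = pd i h₁ x * h₂ x + h₁ x * pd i h₂ x := by
  simp only [pd, fderiv_fun_mul hh₁ hh₂, add_apply, smul_apply, smul_eq_mul]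
  ring

theorem pd_sum {ι : Type*} {s : Finset ι} {F : ι → (Fin n → ℝ) → ℝ}
    (hF : ∀ k ∈ s, DifferentiableAt ℝ (F k) x) (i : Fin n) :
    pd i (fun y => ∑ k ∈ s, F k y) x = ∑ k ∈ s, pd i (F k) x := by
  simp [pd, fderiv_fun_sum hF]

theorem pd_comp {φ : ℝ → ℝ} (hφ : DifferentiableAt ℝ φ (h x)) (hh : DifferentiableAt ℝ h x)
    (i : Fin n) : pd i (fun y => φ (h y)) x = deriv φ (h x) * pd i h x := by
  have hcomp := (hφ.hasDerivAt.comp_hasFDerivAt x hh.hasFDerivAt).fderiv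
  exact congrArg (· (Pi.single i 1)) hcomp

theorem pd_comm (hh : ContDiffAt ℝ 2 h x) (i j : Fin n) :
    pd i (pd j h) x = pd j (pd i h) x := by
  have hd : DifferentiableAt ℝ (fderiv ℝ h) x :=
    (hh.fderiv_right (m := 1) (by norm_num)).differentiableAt one_ne_zero
  have pd_pd (k l : Fin n) :
      pd k (pd l h) x = fderiv ℝ (fderiv ℝ h) x (Pi.single k 1) (Pi.single l 1) := by
    change fderiv ℝ (fun y => fderiv ℝ h y (Pi.single l 1)) x _ = _
    simp [fderiv_clm_apply hd (differentiableAt_const _)]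
  rw [pd_pd, pd_pd]
  exact hh.isSymmSndFDerivAt (by simp) _ _

end PartialDerivatives

section EntrywisePartialDerivatives

variable {n : ℕ} {ι κ μ : Type*} {x : Fin n → ℝ}

/-- The partial derivative `∂_a α` of a vector- or covector-valued function, taken entrywise. -/
noncomputable def vecPd (a : Fin n) (α : (Fin n → ℝ) → ι → ℝ) (x : Fin n → ℝ) : ι → ℝ :=
  fun i => pd a (fun y => α y i) x

/-- The partial derivative `∂_a A` of a matrix-valued function, taken entrywise. -/
noncomputable def matrixPd (a : Fin n) (A : (Fin n → ℝ) → Matrix ι κ ℝ) (x : Fin n → ℝ) :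
    Matrix ι κ ℝ :=
  Matrix.of fun i j => pd a (fun y => A y i j) x

theorem matrixPd_const (A : Matrix ι κ ℝ) (a : Fin n) : matrixPd a (fun _ => A) x = 0 := by
  ext i j
  exact pd_const _ a

theorem matrixPd_neg (A : (Fin n → ℝ) → Matrix ι κ ℝ) (a : Fin n) :
    matrixPd a (fun y => -A y) x = -matrixPd a A x := by
  ext i j
  exact pd_neg _ a

theorem matrixPd_add {A B : (Fin n → ℝ) → Matrix ι κ ℝ}
    (hA : ∀ i j, DifferentiableAt ℝ (fun y => A y i j) x)
    (hB : ∀ i j, DifferentiableAt ℝ (fun y => B y i j) x) (a : Fin n) :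
    matrixPd a (fun y => A y + B y) x = matrixPd a A x + matrixPd a B x := by
  ext i j
  exact pd_add (hA i j) (hB i j) a

theorem matrixPd_comm {A : (Fin n → ℝ) → Matrix ι κ ℝ}
    (hA : ∀ i j, ContDiffAt ℝ 2 (fun y => A y i j) x) (a b : Fin n) :
    matrixPd a (matrixPd b A) x = matrixPd b (matrixPd a A) x := by
  ext i j
  exact pd_comm (hA i j) a b

variable [Fintype κ]

theorem pd_dotProduct {α β : (Fin n → ℝ) → κ → ℝ}
    (hα : ∀ i, DifferentiableAt ℝ (fun y => α y i) x)
    (hβ : ∀ i, DifferentiableAt ℝ (fun y => β y i) x) (a : Fin n) :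
    pd a (fun y => α y ⬝ᵥ β y) x = vecPd a α x ⬝ᵥ β x + α x ⬝ᵥ vecPd a β x := by
  simp only [dotProduct, vecPd, ← Finset.sum_add_distrib]
  rw [pd_sum fun i _ => (hα i).fun_mul (hβ i)]
  exact Finset.sum_congr rfl fun i _ => pd_mul (hα i) (hβ i) a

theorem vecPd_vecMul {α : (Fin n → ℝ) → κ → ℝ} {A : (Fin n → ℝ) → Matrix κ ι ℝ}
    (hα : ∀ i, DifferentiableAt ℝ (fun y => α y i) x)
    (hA : ∀ i j, DifferentiableAt ℝ (fun y => A y i j) x) (a : Fin n) :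
    vecPd a (fun y => α y ᵥ* A y) x = vecPd a α x ᵥ* A x + α x ᵥ* matrixPd a A x := by
  ext j
  exact pd_dotProduct hα (fun i => hA i j) a

theorem vecPd_mulVec {A : (Fin n → ℝ) → Matrix ι κ ℝ} {β : (Fin n → ℝ) → κ → ℝ}
    (hA : ∀ i j, DifferentiableAt ℝ (fun y => A y i j) x)
    (hβ : ∀ i, DifferentiableAt ℝ (fun y => β y i) x) (a : Fin n) :
    vecPd a (fun y => A y *ᵥ β y) x = matrixPd a A x *ᵥ β x + A x *ᵥ vecPd a β x := by
  ext i
  exact pd_dotProduct (hA i) hβ a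

theorem matrixPd_mul {A : (Fin n → ℝ) → Matrix ι κ ℝ} {B : (Fin n → ℝ) → Matrix κ μ ℝ}
    (hA : ∀ i j, DifferentiableAt ℝ (fun y => A y i j) x)
    (hB : ∀ i j, DifferentiableAt ℝ (fun y => B y i j) x) (a : Fin n) :
    matrixPd a (fun y => A y * B y) x = matrixPd a A x * B x + A x * matrixPd a B x := by
  ext i j
  exact pd_dotProduct (hA i) (fun k => hB k j) a

theorem pd_trace {A : (Fin n → ℝ) → Matrix κ κ ℝ}
    (hA : ∀ i, DifferentiableAt ℝ (fun y => A y i i) x) (a : Fin n) :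
    pd a (fun y => (A y).trace) x = (matrixPd a A x).trace :=
  pd_sum (fun i _ => hA i) a

theorem differentiableAt_dotProduct {α β : (Fin n → ℝ) → κ → ℝ}
    (hα : ∀ i, DifferentiableAt ℝ (fun y => α y i) x)
    (hβ : ∀ i, DifferentiableAt ℝ (fun y => β y i) x) :
    DifferentiableAt ℝ (fun y => α y ⬝ᵥ β y) x :=
  DifferentiableAt.fun_sum fun i _ => (hα i).mul (hβ i)

end EntrywisePartialDerivatives

section Connection

variable {n : ℕ} {g gInv : (Fin n → ℝ) → Matrix (Fin n) (Fin n) ℝ}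

/-- `g` is a `C²` semi-Riemannian metric on a coordinate chart and `gInv` is its inverse matrix;
no signature is prescribed. -/
structure IsMetricPair (g gInv : (Fin n → ℝ) → Matrix (Fin n) (Fin n) ℝ) : Prop where
  isSymm : ∀ x, (g x).IsSymm
  mul_inv : ∀ x, g x * gInv x = 1
  contDiff : ∀ i j, ContDiff ℝ 2 (fun y => g y i j)
  contDiff_inv : ∀ i j, ContDiff ℝ 2 (fun y => gInv y i j)

/-- The matrix `ω_a` of the Levi-Civita connection in the `a`-th coordinate direction,
`(ω_a)^k_l = Γ^k_{al}`. -/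
noncomputable def connectionMatrix (g gInv : (Fin n → ℝ) → Matrix (Fin n) (Fin n) ℝ) (a : Fin n)
    (x : Fin n → ℝ) : Matrix (Fin n) (Fin n) ℝ :=
  Matrix.of fun k l => christoffel g gInv x k a l

/-- The curvature matrix `Ω_{cd} = ∂_c ω_d - ∂_d ω_c + [ω_c, ω_d]`, whose entries
`(Ω_{cd})^k_a` are the components `R^k_{acd}` of the Riemann tensor. -/
noncomputable def curvatureMatrix (g gInv : (Fin n → ℝ) → Matrix (Fin n) (Fin n) ℝ)
    (c d : Fin n) (x : Fin n → ℝ) : Matrix (Fin n) (Fin n) ℝ :=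
  matrixPd c (connectionMatrix g gInv d) x - matrixPd d (connectionMatrix g gInv c) x
    + connectionMatrix g gInv c x * connectionMatrix g gInv d x
    - connectionMatrix g gInv d x * connectionMatrix g gInv c x

theorem christoffel_symm (hsymm : ∀ x, (g x).IsSymm) (x : Fin n → ℝ) (k i j : Fin n) :
    christoffel g gInv x k i j = christoffel g gInv x k j i := by
  simp only [christoffel, fun y => (hsymm y).apply j i]
  congr! 3
  ring

theorem sum_metric_mul_christoffel (hinv : ∀ x, g x * gInv x = 1) (x : Fin n → ℝ)
    (m i j : Fin n) :
    ∑ k, g x m k * christoffel g gInv x k i j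
      = (1 / 2) * (pd i (fun y => g y j m) x + pd j (fun y => g y i m) x
        - pd m (fun y => g y i j) x) := by
  let β : Fin n → ℝ := fun l =>
    pd i (fun y => g y j l) x + pd j (fun y => g y i l) x - pd l (fun y => g y i j) x
  change (g x *ᵥ ((1 / 2 : ℝ) • gInv x *ᵥ β)) m = ((1 / 2 : ℝ) • β) m
  rw [Matrix.mulVec_smul, Matrix.mulVec_mulVec, hinv, Matrix.one_mulVec]

theorem matrixPd_metric (hsymm : ∀ x, (g x).IsSymm) (hinv : ∀ x, g x * gInv x = 1)
    (x : Fin n → ℝ) (a : Fin n) :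
    matrixPd a g x
      = g x * connectionMatrix g gInv a x + (connectionMatrix g gInv a x)ᵀ * g x := by
  have lower (i j : Fin n) : (g x * connectionMatrix g gInv a x) i j = (1 / 2) *
      (pd a (fun y => g y j i) x + pd j (fun y => g y a i) x - pd i (fun y => g y a j) x) :=
    sum_metric_mul_christoffel hinv x i a j
  have hflip : (connectionMatrix g gInv a x)ᵀ * g x
      = (g x * connectionMatrix g gInv a x)ᵀ := by
    rw [Matrix.transpose_mul, hsymm x]
  ext i j
  rw [hflip, Matrix.add_apply, Matrix.transpose_apply, lower, lower]
  simp only [matrixPd, Matrix.of_apply, fun y => (hsymm y).apply i j]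
  ring

namespace IsMetricPair

variable (hM : IsMetricPair g gInv)
include hM

theorem inv_mul (x : Fin n → ℝ) : gInv x * g x = 1 :=
  mul_eq_one_comm.mp (hM.mul_inv x)

theorem isSymm_inv (x : Fin n → ℝ) : (gInv x).IsSymm := by
  rw [← Matrix.inv_eq_right_inv (hM.mul_inv x)]
  exact (hM.isSymm x).inv

theorem differentiableAt (x : Fin n → ℝ) (i j : Fin n) :
    DifferentiableAt ℝ (fun y => g y i j) x :=
  (hM.contDiff i j).contDiffAt.differentiableAt two_ne_zero

theorem differentiableAt_inv (x : Fin n → ℝ) (i j : Fin n) :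
    DifferentiableAt ℝ (fun y => gInv y i j) x :=
  (hM.contDiff_inv i j).contDiffAt.differentiableAt two_ne_zero

theorem contDiff_connectionMatrix (a k l : Fin n) :
    ContDiff ℝ 1 (fun y => connectionMatrix g gInv a y k l) := by
  have hpd (b i j : Fin n) : ContDiff ℝ 1 (pd b (fun y => g y i j)) :=
    contDiff_pd (hM.contDiff i j) (by norm_num) b
  refine contDiff_const.mul (ContDiff.sum fun m _ => ?_)
  exact ((hM.contDiff_inv k m).of_le one_le_two).mul
    (((hpd a l m).add (hpd l a m)).sub (hpd m a l))

theorem differentiableAt_connectionMatrix (a : Fin n) (x : Fin n → ℝ) (k l : Fin n) :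
    DifferentiableAt ℝ (fun y => connectionMatrix g gInv a y k l) x :=
  (hM.contDiff_connectionMatrix a k l).contDiffAt.differentiableAt one_ne_zero

theorem matrixPd_inv (a : Fin n) (x : Fin n → ℝ) :
    matrixPd a gInv x
      = -(connectionMatrix g gInv a x * gInv x + gInv x * (connectionMatrix g gInv a x)ᵀ) := by
  set ω := connectionMatrix g gInv a x
  have hprod : matrixPd a g x * gInv x + g x * matrixPd a gInv x = 0 := by
    rw [← matrixPd_mul (hM.differentiableAt x) (hM.differentiableAt_inv x), funext hM.mul_inv,
      matrixPd_const]
  calc matrixPd a gInv x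
      = gInv x * (g x * matrixPd a gInv x) := by rw [← mul_assoc, hM.inv_mul, one_mul]
    _ = -(gInv x * ((g x * ω + ωᵀ * g x) * gInv x)) := by
        rw [eq_neg_of_add_eq_zero_right hprod, mul_neg,
          matrixPd_metric hM.isSymm hM.mul_inv]
    _ = -((gInv x * g x) * ω * gInv x + gInv x * ωᵀ * (g x * gInv x)) := by noncomm_ring
    _ = -(ω * gInv x + gInv x * ωᵀ) := by rw [hM.inv_mul, hM.mul_inv, one_mul, mul_one]

theorem matrixPd_matrixPd_inv (c d : Fin n) (x : Fin n → ℝ) :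
    matrixPd c (matrixPd d gInv) x
      = -(matrixPd c (connectionMatrix g gInv d) x * gInv x
        + connectionMatrix g gInv d x * matrixPd c gInv x
        + (matrixPd c gInv x * (connectionMatrix g gInv d x)ᵀ
          + gInv x * (matrixPd c (connectionMatrix g gInv d) x)ᵀ)) := by
  have hω := hM.differentiableAt_connectionMatrix d x
  have hG := hM.differentiableAt_inv x
  have hωt (k l : Fin n) :
      DifferentiableAt ℝ (fun y => (connectionMatrix g gInv d y)ᵀ k l) x := hω l k
  rw [funext (hM.matrixPd_inv d), matrixPd_neg, matrixPd_add, matrixPd_mul hω hG,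
    matrixPd_mul hG hωt]
  · rfl
  · exact fun i j => differentiableAt_dotProduct (hω i) (fun k => hG k j)
  · exact fun i j => differentiableAt_dotProduct (hG i) (fun k => hω j k)

/-- The curvature is skew for the metric because the second derivatives of `gInv` commute. -/
theorem curvatureMatrix_mul_inv (c d : Fin n) (x : Fin n → ℝ) :
    curvatureMatrix g gInv c d x * gInv x = -(gInv x * (curvatureMatrix g gInv c d x)ᵀ) := by
  have hcomm := matrixPd_comm (fun i j => (hM.contDiff_inv i j).contDiffAt (x := x)) c d
  rw [hM.matrixPd_matrixPd_inv, hM.matrixPd_matrixPd_inv, hM.matrixPd_inv, hM.matrixPd_inv]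
    at hcomm
  rw [eq_neg_iff_add_eq_zero, ← neg_eq_zero, ← sub_eq_zero.mpr hcomm]
  simp only [curvatureMatrix, Matrix.transpose_add, Matrix.transpose_sub, Matrix.transpose_mul]
  noncomm_ring

end IsMetricPair

theorem curvatureMatrix_swap (c d : Fin n) (x : Fin n → ℝ) :
    curvatureMatrix g gInv d c x = -curvatureMatrix g gInv c d x := by
  simp only [curvatureMatrix]
  abel

theorem sum_curvatureMatrix_eq_ricci (hsymm : ∀ x, (g x).IsSymm) (x : Fin n → ℝ) (i j : Fin n) :
    ∑ k, curvatureMatrix g gInv k j x k i = ricci g gInv x i j := by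
  simp only [curvatureMatrix, ricci, matrixPd, connectionMatrix, Matrix.sub_apply,
    Matrix.add_apply, Matrix.of_apply, Matrix.mul_apply, Finset.sum_sub_distrib,
    Finset.sum_add_distrib, fun y k => christoffel_symm (gInv := gInv) hsymm y k j i]

end Connection

section CovariantDerivative

variable {n : ℕ} {g gInv : (Fin n → ℝ) → Matrix (Fin n) (Fin n) ℝ} {h h₁ h₂ : (Fin n → ℝ) → ℝ}
  {x : Fin n → ℝ}

theorem dotProduct_mulVec_comm {ι R : Type*} [Fintype ι] [CommSemiring R] {A : Matrix ι ι R}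
    (hA : A.IsSymm) (u v : ι → R) : u ⬝ᵥ A *ᵥ v = v ⬝ᵥ A *ᵥ u := by
  rw [← Matrix.dotProduct_transpose_mulVec, hA]

/-- The covariant derivative `(∇_a α)_i = ∂_a α_i - Γ^k_{ai} α_k` of a covector field. -/
noncomputable def covDeriv (g gInv : (Fin n → ℝ) → Matrix (Fin n) (Fin n) ℝ) (a : Fin n)
    (α : (Fin n → ℝ) → Fin n → ℝ) (x : Fin n → ℝ) : Fin n → ℝ :=
  vecPd a α x - α x ᵥ* connectionMatrix g gInv a x

/-- The covariant derivative `(∇_a T)_{ij} = ∂_a T_{ij} - Γ^k_{ai} T_{kj} - Γ^k_{aj} T_{ik}` of a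
twice covariant tensor field. -/
noncomputable def covDerivTensor (g gInv : (Fin n → ℝ) → Matrix (Fin n) (Fin n) ℝ) (a : Fin n)
    (T : (Fin n → ℝ) → Matrix (Fin n) (Fin n) ℝ) (x : Fin n → ℝ) : Matrix (Fin n) (Fin n) ℝ :=
  matrixPd a T x - (connectionMatrix g gInv a x)ᵀ * T x - T x * connectionMatrix g gInv a x

/-- The covector field `dh = (∂_1 h, …, ∂_n h)`. -/
noncomputable def differential (h : (Fin n → ℝ) → ℝ) (x : Fin n → ℝ) : Fin n → ℝ :=
  fun i => pd i h x

/-- The Hessian `hess` as a matrix-valued function, so that matrix algebra applies to it. -/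
noncomputable def hessMatrix (g gInv : (Fin n → ℝ) → Matrix (Fin n) (Fin n) ℝ)
    (h : (Fin n → ℝ) → ℝ) (x : Fin n → ℝ) : Matrix (Fin n) (Fin n) ℝ :=
  Matrix.of (hess g gInv h x)

theorem covDerivTensor_apply (T : (Fin n → ℝ) → Matrix (Fin n) (Fin n) ℝ) (a i : Fin n) :
    covDerivTensor g gInv a T x i
      = covDeriv g gInv a (fun y => T y i) x - (connectionMatrix g gInv a x).col i ᵥ* T x := by
  ext j
  exact sub_right_comm _ _ _

theorem covDerivTensor_apply_comm {T : (Fin n → ℝ) → Matrix (Fin n) (Fin n) ℝ}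
    (hT : ∀ y, (T y).IsSymm) (a i j : Fin n) :
    covDerivTensor g gInv a T x i j = covDerivTensor g gInv a T x j i := by
  have hpd : (matrixPd a T x)ᵀ = matrixPd a T x := by
    ext k l
    simp only [matrixPd, Matrix.transpose_apply, Matrix.of_apply, fun y => (hT y).apply k l]
  have hsymm : (covDerivTensor g gInv a T x)ᵀ = covDerivTensor g gInv a T x := by
    simp only [covDerivTensor, Matrix.transpose_sub, Matrix.transpose_mul,
      Matrix.transpose_transpose, (hT x).eq, hpd]
    exact sub_right_comm _ _ _
  exact congrFun₂ hsymm j i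

theorem covDeriv_differential (a : Fin n) :
    covDeriv g gInv a (differential h) x = hess g gInv h x a := by
  ext j
  simp [covDeriv, vecPd, differential, hess, connectionMatrix, Matrix.vecMul, dotProduct, mul_comm]

theorem gradComp_eq_mulVec : gradComp gInv h x = gInv x *ᵥ differential h x := rfl

theorem innerGrad_eq_dotProduct :
    innerGrad gInv h₁ h₂ x = differential h₁ x ⬝ᵥ gradComp gInv h₂ x := by
  simp only [innerGrad, gradComp, dotProduct, differential, Finset.mul_sum]
  exact Finset.sum_congr rfl fun i _ => Finset.sum_congr rfl fun j _ => by ring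

theorem innerGrad_comm (hG : (gInv x).IsSymm) :
    innerGrad gInv h₁ h₂ x = innerGrad gInv h₂ h₁ x := by
  simp only [innerGrad_eq_dotProduct, gradComp_eq_mulVec]
  exact dotProduct_mulVec_comm hG _ _

theorem isSymm_hessMatrix (hsymm : ∀ x, (g x).IsSymm) (hh : ContDiffAt ℝ 2 h x) :
    (hessMatrix g gInv h x).IsSymm := by
  ext i j
  simp only [hessMatrix, hess, Matrix.transpose_apply, Matrix.of_apply]
  rw [pd_comm hh]
  simp only [christoffel_symm hsymm x _ i j]

theorem covDeriv_covDeriv_sub {α : (Fin n → ℝ) → Fin n → ℝ} (hM : IsMetricPair g gInv)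
    (hα : ∀ i, ContDiff ℝ 2 (fun y => α y i)) (c d : Fin n) :
    covDeriv g gInv c (covDeriv g gInv d α) x - covDeriv g gInv d (covDeriv g gInv c α) x
      = -(α x ᵥ* curvatureMatrix g gInv c d x) := by
  have hdα (i : Fin n) : DifferentiableAt ℝ (fun y => α y i) x :=
    (hα i).contDiffAt.differentiableAt two_ne_zero
  have hω (a : Fin n) := hM.differentiableAt_connectionMatrix a x
  have vecPd_covDeriv (a b : Fin n) : vecPd a (covDeriv g gInv b α) x = vecPd a (vecPd b α) x
      - (vecPd a α x ᵥ* connectionMatrix g gInv b x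
        + α x ᵥ* matrixPd a (connectionMatrix g gInv b) x) := by
    rw [← vecPd_vecMul hdα (hω b)]
    ext i
    refine pd_sub ?_ (differentiableAt_dotProduct hdα fun k => hω b k i) a
    exact (contDiff_pd (m := 1) (hα i) (by norm_num) b).contDiffAt.differentiableAt one_ne_zero
  have hcomm : vecPd c (vecPd d α) x = vecPd d (vecPd c α) x := by
    ext i
    exact pd_comm (hα i).contDiffAt c d
  rw [covDeriv, covDeriv.eq_def g gInv d (covDeriv g gInv c α), vecPd_covDeriv, vecPd_covDeriv,
    hcomm]
  simp only [covDeriv, curvatureMatrix, Matrix.sub_vecMul, Matrix.vecMul_sub, Matrix.vecMul_add,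
    Matrix.vecMul_vecMul]
  abel

theorem pd_dotProduct_inv_mulVec {α β : (Fin n → ℝ) → Fin n → ℝ} (hM : IsMetricPair g gInv)
    (hα : ∀ i, DifferentiableAt ℝ (fun y => α y i) x)
    (hβ : ∀ i, DifferentiableAt ℝ (fun y => β y i) x) (a : Fin n) :
    pd a (fun y => α y ⬝ᵥ gInv y *ᵥ β y) x
      = covDeriv g gInv a α x ⬝ᵥ gInv x *ᵥ β x + α x ⬝ᵥ gInv x *ᵥ covDeriv g gInv a β x := by
  have hG := hM.differentiableAt_inv x
  have hGβ (i : Fin n) : DifferentiableAt ℝ (fun y => (gInv y *ᵥ β y) i) x :=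
    differentiableAt_dotProduct (hG i) hβ
  rw [pd_dotProduct hα hGβ, vecPd_mulVec hG hβ, hM.matrixPd_inv]
  simp only [covDeriv, Matrix.neg_mulVec, Matrix.add_mulVec, Matrix.mulVec_sub, sub_dotProduct,
    dotProduct_add, dotProduct_sub, dotProduct_neg, ← Matrix.mulVec_mulVec,
    Matrix.mulVec_transpose, ← Matrix.dotProduct_mulVec]
  ring

theorem pd_trace_inv_mul_transpose {T : (Fin n → ℝ) → Matrix (Fin n) (Fin n) ℝ}
    (hM : IsMetricPair g gInv) (hT : ∀ i j, DifferentiableAt ℝ (fun y => T y i j) x)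
    (a : Fin n) :
    pd a (fun y => (gInv y * (T y)ᵀ).trace) x
      = (gInv x * (covDerivTensor g gInv a T x)ᵀ).trace := by
  have hG := hM.differentiableAt_inv x
  have hTt (i j : Fin n) : DifferentiableAt ℝ (fun y => (T y)ᵀ i j) x := hT j i
  have hGT (i : Fin n) : DifferentiableAt ℝ (fun y => (gInv y * (T y)ᵀ) i i) x :=
    differentiableAt_dotProduct (hG i) fun k => hTt k i
  rw [pd_trace hGT, matrixPd_mul hG hTt, hM.matrixPd_inv]
  have hcycle : (connectionMatrix g gInv a x * (gInv x * (T x)ᵀ)).trace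
      = (gInv x * ((T x)ᵀ * connectionMatrix g gInv a x)).trace := by
    rw [Matrix.trace_mul_comm, mul_assoc]
  have htranspose : matrixPd a (fun y => (T y)ᵀ) x = (matrixPd a T x)ᵀ := rfl
  simp only [covDerivTensor, Matrix.transpose_sub, Matrix.transpose_mul,
    Matrix.transpose_transpose, neg_mul, add_mul, mul_sub, Matrix.trace_add, Matrix.trace_sub,
    Matrix.trace_neg, mul_assoc, hcycle, htranspose]
  ring

end CovariantDerivative

section Bochner

variable {n : ℕ} {g gInv : (Fin n → ℝ) → Matrix (Fin n) (Fin n) ℝ} {f h₁ h₂ : (Fin n → ℝ) → ℝ}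

theorem differentiableAt_hess (hM : IsMetricPair g gInv) (hf : ContDiff ℝ 3 f) (x : Fin n → ℝ)
    (i j : Fin n) : DifferentiableAt ℝ (fun y => hess g gInv f y i j) x := by
  have hdf (k : Fin n) : ContDiff ℝ 2 (pd k f) := contDiff_pd hf (by norm_num) k
  have hddf : ContDiff ℝ 1 (pd i (pd j f)) := contDiff_pd (hdf j) (by norm_num) i
  have hΓdf (k : Fin n) : DifferentiableAt ℝ (fun y => christoffel g gInv y k i j * pd k f y) x :=
    (hM.differentiableAt_connectionMatrix i x k j).mul
      ((hdf k).contDiffAt.differentiableAt two_ne_zero)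
  exact (hddf.contDiffAt.differentiableAt one_ne_zero).sub
    (DifferentiableAt.fun_sum fun k _ => hΓdf k)

theorem covDerivTensor_hessMatrix_sub (hM : IsMetricPair g gInv) (hf : ContDiff ℝ 3 f)
    (x : Fin n → ℝ) (b a i : Fin n) :
    covDerivTensor g gInv b (hessMatrix g gInv f) x a i
        - covDerivTensor g gInv i (hessMatrix g gInv f) x b a
      = (differential f x ᵥ* curvatureMatrix g gInv i b x) a := by
  have hf2 (y : Fin n → ℝ) : ContDiffAt ℝ 2 f y := hf.contDiffAt.of_le (by norm_num)
  have hdf (k : Fin n) : ContDiff ℝ 2 (fun y => differential f y k) :=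
    contDiff_pd hf (by norm_num) k
  have htorsion : (connectionMatrix g gInv b x).col i = (connectionMatrix g gInv i x).col b :=
    funext fun k => christoffel_symm hM.isSymm x k b i
  have hrow (c : Fin n) :
      (fun y => hessMatrix g gInv f y c) = covDeriv g gInv c (differential f) :=
    funext fun _ => (covDeriv_differential c).symm
  rw [covDerivTensor_apply_comm (fun y => isSymm_hessMatrix hM.isSymm (hf2 y)),
    covDerivTensor_apply, covDerivTensor_apply, htorsion, hrow, hrow, ← Pi.sub_apply,
    sub_sub_sub_cancel_right, covDeriv_covDeriv_sub hM hdf, curvatureMatrix_swap i b,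
    Matrix.vecMul_neg, neg_neg]

theorem pd_innerGrad (hM : IsMetricPair g gInv) {x : Fin n → ℝ} (hh₁ : ContDiffAt ℝ 2 h₁ x)
    (hh₂ : ContDiffAt ℝ 2 h₂ x) (a : Fin n) :
    pd a (innerGrad gInv h₁ h₂) x
      = hess g gInv h₁ x a ⬝ᵥ gradComp gInv h₂ x + hess g gInv h₂ x a ⬝ᵥ gradComp gInv h₁ x := by
  have hdiff {h : (Fin n → ℝ) → ℝ} (hh : ContDiffAt ℝ 2 h x) (i : Fin n) :
      DifferentiableAt ℝ (fun y => differential h y i) x :=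
    (contDiffAt_pd (m := 1) hh (by norm_num) i).differentiableAt one_ne_zero
  rw [funext fun y => innerGrad_eq_dotProduct (gInv := gInv) (h₁ := h₁) (h₂ := h₂) (x := y)]
  refine (pd_dotProduct_inv_mulVec hM (hdiff hh₁) (hdiff hh₂) a).trans ?_
  rw [covDeriv_differential, covDeriv_differential,
    dotProduct_mulVec_comm (hM.isSymm_inv x) (differential h₁ x)]
  rfl

theorem pd_innerGrad_self (hM : IsMetricPair g gInv) {x : Fin n → ℝ} (hf : ContDiffAt ℝ 2 f x)
    (a : Fin n) :
    pd a (innerGrad gInv f f) x = 2 * (hess g gInv f x a ⬝ᵥ gradComp gInv f x) := by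
  rw [pd_innerGrad hM hf hf, two_mul]

theorem innerGrad_innerGrad_self (hM : IsMetricPair g gInv) {x : Fin n → ℝ}
    (hf : ContDiffAt ℝ 2 f x) :
    innerGrad gInv f (innerGrad gInv f f) x
      = 2 * ∑ i, ∑ j, hess g gInv f x i j * gradComp gInv f x i * gradComp gInv f x j := by
  rw [innerGrad_comm (hM.isSymm_inv x), innerGrad_eq_dotProduct]
  simp only [dotProduct, differential, pd_innerGrad_self hM hf, Finset.mul_sum, Finset.sum_mul]
  exact Finset.sum_congr rfl fun i _ => Finset.sum_congr rfl fun j _ => by ring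

theorem hess_innerGrad_self (hM : IsMetricPair g gInv) (hf : ContDiff ℝ 3 f) (x : Fin n → ℝ)
    (b a : Fin n) :
    hess g gInv (innerGrad gInv f f) x b a
      = 2 * (covDerivTensor g gInv b (hessMatrix g gInv f) x a ⬝ᵥ gradComp gInv f x
        + hess g gInv f x b ⬝ᵥ gInv x *ᵥ hess g gInv f x a) := by
  have hpd (c : Fin n) : pd c (innerGrad gInv f f)
      = fun y => 2 * (hess g gInv f y c ⬝ᵥ gInv y *ᵥ differential f y) :=
    funext fun y => pd_innerGrad_self hM (hf.contDiffAt.of_le (by norm_num)) c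
  have hdf (i : Fin n) : DifferentiableAt ℝ (fun y => differential f y i) x :=
    (contDiff_pd (m := 2) hf (by norm_num) i).contDiffAt.differentiableAt two_ne_zero
  have hH (i : Fin n) := differentiableAt_hess hM hf x a i
  have hHdf : DifferentiableAt ℝ (fun y => hess g gInv f y a ⬝ᵥ gInv y *ᵥ differential f y) x :=
    differentiableAt_dotProduct hH fun i =>
      differentiableAt_dotProduct (hM.differentiableAt_inv x i) hdf
  have hΓ : ∑ k, christoffel g gInv x k b a *
        (2 * (hess g gInv f x k ⬝ᵥ gInv x *ᵥ differential f x))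
      = 2 * (((connectionMatrix g gInv b x).col a ᵥ* hessMatrix g gInv f x)
        ⬝ᵥ gInv x *ᵥ differential f x) := by
    rw [← Matrix.dotProduct_mulVec, dotProduct, Finset.mul_sum]
    exact Finset.sum_congr rfl fun k _ => mul_left_comm _ _ _
  have hrow : covDerivTensor g gInv b (hessMatrix g gInv f) x a
      = covDeriv g gInv b (fun y => hess g gInv f y a) x
        - (connectionMatrix g gInv b x).col a ᵥ* hessMatrix g gInv f x :=
    covDerivTensor_apply _ b a
  rw [hess, hpd a, pd_mul (differentiableAt_const 2) hHdf, pd_const, zero_mul, zero_add,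
    pd_dotProduct_inv_mulVec hM hH hdf, covDeriv_differential, hrow, sub_dotProduct,
    gradComp_eq_mulVec, dotProduct_mulVec_comm (hM.isSymm_inv x) (hess g gInv f x b)]
  simp only [hpd, hΓ]
  ring

theorem pd_laplaceBeltrami (hM : IsMetricPair g gInv) (hf : ContDiff ℝ 3 f) (x : Fin n → ℝ)
    (i : Fin n) :
    pd i (laplaceBeltrami g gInv f) x
      = ∑ b, ∑ a, gInv x b a * covDerivTensor g gInv i (hessMatrix g gInv f) x b a :=
  pd_trace_inv_mul_transpose hM (differentiableAt_hess hM hf x) i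

theorem sum_inv_mul_vecMul_curvatureMatrix (hM : IsMetricPair g gInv) (h : (Fin n → ℝ) → ℝ)
    (x : Fin n → ℝ) (i : Fin n) :
    ∑ b, ∑ a, gInv x b a * (differential h x ᵥ* curvatureMatrix g gInv i b x) a
      = ∑ j, ricci g gInv x j i * gradComp gInv h x j := by
  have hskew (b : Fin n) : gInv x *ᵥ (differential h x ᵥ* curvatureMatrix g gInv i b x)
      = curvatureMatrix g gInv b i x *ᵥ gradComp gInv h x := by
    rw [← Matrix.mulVec_transpose, Matrix.mulVec_mulVec, curvatureMatrix_swap i b,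
      gradComp_eq_mulVec, Matrix.mulVec_mulVec, neg_mul, hM.curvatureMatrix_mul_inv, neg_neg]
  calc ∑ b, (gInv x *ᵥ (differential h x ᵥ* curvatureMatrix g gInv i b x)) b
      = ∑ b, ∑ j, curvatureMatrix g gInv b i x b j * gradComp gInv h x j := by
        simp only [hskew]; rfl
    _ = ∑ j, ricci g gInv x j i * gradComp gInv h x j := by
        rw [Finset.sum_comm]
        simp only [← sum_curvatureMatrix_eq_ricci hM.isSymm, Finset.sum_mul]

/-- The trace of the commutation formula `f_{jii} = f_{iij} + R_{ij} f_i`. -/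
theorem sum_inv_mul_covDerivTensor_hessMatrix (hM : IsMetricPair g gInv) (hf : ContDiff ℝ 3 f)
    (x : Fin n → ℝ) (i : Fin n) :
    ∑ b, ∑ a, gInv x b a * covDerivTensor g gInv b (hessMatrix g gInv f) x a i
      = pd i (laplaceBeltrami g gInv f) x + ∑ j, ricci g gInv x j i * gradComp gInv f x j := by
  simp only [← sum_inv_mul_vecMul_curvatureMatrix hM, pd_laplaceBeltrami hM hf,
    ← covDerivTensor_hessMatrix_sub hM hf, mul_sub, Finset.sum_sub_distrib,
    add_sub_cancel]

theorem laplaceBeltrami_innerGrad_self (hM : IsMetricPair g gInv) (hf : ContDiff ℝ 3 f)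
    (x : Fin n → ℝ) :
    laplaceBeltrami g gInv (innerGrad gInv f f) x
      = 2 * (∑ i, ∑ j, ∑ a, ∑ b, gInv x i a * gInv x j b *
            hess g gInv f x i j * hess g gInv f x a b)
        + 2 * innerGrad gInv f (laplaceBeltrami g gInv f) x
        + 2 * (∑ i, ∑ j, ricci g gInv x i j * gradComp gInv f x i * gradComp gInv f x j) := by
  have hnorm : ∑ b, ∑ a, gInv x b a * (hess g gInv f x b ⬝ᵥ gInv x *ᵥ hess g gInv f x a)
      = ∑ i, ∑ j, ∑ a, ∑ b, gInv x i a * gInv x j b *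
          hess g gInv f x i j * hess g gInv f x a b := by
    simp only [dotProduct, Matrix.mulVec, Finset.mul_sum]
    refine Finset.sum_congr rfl fun i _ => Finset.sum_comm.trans ?_
    refine Finset.sum_congr rfl fun j _ => Finset.sum_congr rfl fun a _ =>
      Finset.sum_congr rfl fun b _ => ?_
    ring
  have hdiv : ∑ b, ∑ a, gInv x b a *
        (covDerivTensor g gInv b (hessMatrix g gInv f) x a ⬝ᵥ gradComp gInv f x)
      = ∑ i, (∑ b, ∑ a, gInv x b a * covDerivTensor g gInv b (hessMatrix g gInv f) x a i)
          * gradComp gInv f x i := by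
    simp only [dotProduct, Finset.mul_sum, Finset.sum_mul, mul_assoc]
    exact Finset.sum_comm_cycle
  have hgrad : ∑ i, pd i (laplaceBeltrami g gInv f) x * gradComp gInv f x i
      = innerGrad gInv f (laplaceBeltrami g gInv f) x := by
    rw [innerGrad_comm (hM.isSymm_inv x), innerGrad_eq_dotProduct]
    rfl
  have hricci : ∑ i, (∑ j, ricci g gInv x j i * gradComp gInv f x j) * gradComp gInv f x i
      = ∑ i, ∑ j, ricci g gInv x i j * gradComp gInv f x i * gradComp gInv f x j := by
    simp only [Finset.sum_mul]
    exact Finset.sum_comm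
  simp only [sum_inv_mul_covDerivTensor_hessMatrix hM hf, add_mul, Finset.sum_add_distrib,
    hgrad, hricci] at hdiv
  simp only [laplaceBeltrami.eq_def g gInv (innerGrad gInv f f), hess_innerGrad_self hM hf,
    mul_left_comm _ (2 : ℝ), ← Finset.mul_sum, mul_add, Finset.sum_add_distrib, hdiv, hnorm]
  ring

end Bochner

section ProductAndChainRules

variable {n : ℕ} {g gInv : (Fin n → ℝ) → Matrix (Fin n) (Fin n) ℝ}
  {h h₁ h₂ : (Fin n → ℝ) → ℝ} {φ : ℝ → ℝ} {x : Fin n → ℝ}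

theorem hess_mul (hh₁ : ContDiffAt ℝ 2 h₁ x) (hh₂ : ContDiffAt ℝ 2 h₂ x) (i j : Fin n) :
    hess g gInv (fun y => h₁ y * h₂ y) x i j
      = hess g gInv h₁ x i j * h₂ x + h₁ x * hess g gInv h₂ x i j
        + pd i h₁ x * pd j h₂ x + pd j h₁ x * pd i h₂ x := by
  have hd₁ := hh₁.differentiableAt two_ne_zero
  have hd₂ := hh₂.differentiableAt two_ne_zero
  have hpd₁ : DifferentiableAt ℝ (pd j h₁) x :=
    (contDiffAt_pd (m := 1) hh₁ (by norm_num) j).differentiableAt one_ne_zero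
  have hpd₂ : DifferentiableAt ℝ (pd j h₂) x :=
    (contDiffAt_pd (m := 1) hh₂ (by norm_num) j).differentiableAt one_ne_zero
  have hpd_mul : pd j (fun y => h₁ y * h₂ y)
      =ᶠ[𝓝 x] fun y => pd j h₁ y * h₂ y + h₁ y * pd j h₂ y := by
    filter_upwards [hh₁.eventually (by simp), hh₂.eventually (by simp)] with y hy₁ hy₂
    exact pd_mul (hy₁.differentiableAt two_ne_zero) (hy₂.differentiableAt two_ne_zero) j
  have hΓ : ∑ k, christoffel g gInv x k i j * (pd k h₁ x * h₂ x + h₁ x * pd k h₂ x)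
      = (∑ k, christoffel g gInv x k i j * pd k h₁ x) * h₂ x
        + h₁ x * ∑ k, christoffel g gInv x k i j * pd k h₂ x := by
    rw [Finset.sum_mul, Finset.mul_sum, ← Finset.sum_add_distrib]
    exact Finset.sum_congr rfl fun k _ => by ring
  simp only [hess, pd_mul hd₁ hd₂, hΓ]
  rw [pd_congr hpd_mul, pd_add (hpd₁.fun_mul hd₂) (hd₁.fun_mul hpd₂), pd_mul hpd₁ hd₂,
    pd_mul hd₁ hpd₂]
  ring

theorem hess_comp (hφ : ContDiffAt ℝ 2 φ (h x)) (hh : ContDiffAt ℝ 2 h x) (i j : Fin n) :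
    hess g gInv (fun y => φ (h y)) x i j
      = deriv φ (h x) * hess g gInv h x i j
        + deriv (deriv φ) (h x) * (pd i h x * pd j h x) := by
  have hd := hh.differentiableAt two_ne_zero
  have hpd : DifferentiableAt ℝ (pd j h) x :=
    (contDiffAt_pd (m := 1) hh (by norm_num) j).differentiableAt one_ne_zero
  have hφ' : DifferentiableAt ℝ (deriv φ) (h x) :=
    ((hφ.fderiv_right (m := 1) (by norm_num)).clm_apply contDiffAt_const).differentiableAt
      one_ne_zero
  have hφ'h : DifferentiableAt ℝ (fun y => deriv φ (h y)) x := hφ'.comp x hd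
  have hpd_comp : pd j (fun y => φ (h y)) =ᶠ[𝓝 x] fun y => deriv φ (h y) * pd j h y := by
    filter_upwards [hh.continuousAt.eventually (hφ.eventually (by simp)),
      hh.eventually (by simp)] with y hφy hy
    exact pd_comp (hφy.differentiableAt two_ne_zero) (hy.differentiableAt two_ne_zero) j
  simp only [hess, pd_comp (hφ.differentiableAt two_ne_zero) hd, mul_left_comm _ (deriv φ (h x)),
    ← Finset.mul_sum]
  rw [pd_congr hpd_comp, pd_mul (hφ'h) hpd, pd_comp hφ' hd]
  ring

theorem laplaceBeltrami_mul (hG : (gInv x).IsSymm) (hh₁ : ContDiffAt ℝ 2 h₁ x)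
    (hh₂ : ContDiffAt ℝ 2 h₂ x) :
    laplaceBeltrami g gInv (fun y => h₁ y * h₂ y) x
      = laplaceBeltrami g gInv h₁ x * h₂ x + h₁ x * laplaceBeltrami g gInv h₂ x
        + 2 * innerGrad gInv h₁ h₂ x := by
  rw [two_mul, ← add_assoc]
  nth_rw 2 [innerGrad_comm hG]
  simp only [laplaceBeltrami, innerGrad, hess_mul hh₁ hh₂, Finset.sum_mul, Finset.mul_sum,
    ← Finset.sum_add_distrib]
  exact Finset.sum_congr rfl fun i _ => Finset.sum_congr rfl fun j _ => by ring

theorem laplaceBeltrami_comp (hφ : ContDiffAt ℝ 2 φ (h x)) (hh : ContDiffAt ℝ 2 h x) :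
    laplaceBeltrami g gInv (fun y => φ (h y)) x
      = deriv φ (h x) * laplaceBeltrami g gInv h x
        + deriv (deriv φ) (h x) * innerGrad gInv h h x := by
  simp only [laplaceBeltrami, innerGrad, hess_comp hφ hh, Finset.mul_sum,
    ← Finset.sum_add_distrib]
  exact Finset.sum_congr rfl fun i _ => Finset.sum_congr rfl fun j _ => by ring

theorem innerGrad_comp (hφ : DifferentiableAt ℝ φ (h₁ x)) (hh₁ : DifferentiableAt ℝ h₁ x) :
    innerGrad gInv (fun y => φ (h₁ y)) h₂ x = deriv φ (h₁ x) * innerGrad gInv h₁ h₂ x := by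
  simp only [innerGrad, pd_comp hφ hh₁, Finset.mul_sum]
  exact Finset.sum_congr rfl fun i _ => Finset.sum_congr rfl fun j _ => by ring

theorem contDiffAt_innerGrad (hM : IsMetricPair g gInv) (hh₁ : ContDiffAt ℝ 3 h₁ x)
    (hh₂ : ContDiffAt ℝ 3 h₂ x) : ContDiffAt ℝ 2 (innerGrad gInv h₁ h₂) x :=
  ContDiffAt.sum fun i _ => ContDiffAt.sum fun j _ =>
    ((hM.contDiff_inv i j).contDiffAt.mul (contDiffAt_pd hh₁ (by norm_num) i)).mul
      (contDiffAt_pd hh₂ (by norm_num) j)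

theorem laplaceBeltrami_innerGrad_self_mul_comp (hM : IsMetricPair g gInv)
    (hh : ContDiffAt ℝ 3 h x) (hφ : ContDiffAt ℝ 2 φ (h x)) :
    laplaceBeltrami g gInv (fun y => innerGrad gInv h h y * φ (h y)) x
      = laplaceBeltrami g gInv (innerGrad gInv h h) x * φ (h x)
        + 4 * deriv φ (h x) *
          (∑ i, ∑ j, hess g gInv h x i j * gradComp gInv h x i * gradComp gInv h x j)
        + innerGrad gInv h h x * (deriv φ (h x) * laplaceBeltrami g gInv h x
          + deriv (deriv φ) (h x) * innerGrad gInv h h x) := by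
  have hh2 : ContDiffAt ℝ 2 h x := hh.of_le (by norm_num)
  have hcross : innerGrad gInv (innerGrad gInv h h) (fun y => φ (h y)) x
      = deriv φ (h x) * (2 *
        ∑ i, ∑ j, hess g gInv h x i j * gradComp gInv h x i * gradComp gInv h x j) := by
    rw [innerGrad_comm (hM.isSymm_inv x), innerGrad_comp (hφ.differentiableAt two_ne_zero)
      (hh2.differentiableAt two_ne_zero), innerGrad_innerGrad_self hM hh2]
  rw [laplaceBeltrami_mul (hM.isSymm_inv x) (contDiffAt_innerGrad hM hh hh) (hφ.fun_comp x hh2),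
    laplaceBeltrami_comp hφ hh2, hcross]
  ring

theorem deriv_one_sub_zpow (m : ℤ) :
    deriv (fun t : ℝ => (1 - t) ^ m) = fun t => -(m : ℝ) * (1 - t) ^ (m - 1) := by
  ext t
  rw [deriv_comp_const_sub (f := fun s : ℝ => s ^ m), deriv_zpow, neg_mul]

end ProductAndChainRules

theorem stmt_16_general {n : ℕ} {g gInv : (Fin n → ℝ) → Matrix (Fin n) (Fin n) ℝ}
    (hM : IsMetricPair g gInv) {f w : (Fin n → ℝ) → ℝ} (hf : ContDiff ℝ 3 f)
    (hw : ∀ x, w x = innerGrad gInv f f x / (1 - f x) ^ 2) {x : Fin n → ℝ} (hx : f x ≠ 1) :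
    laplaceBeltrami g gInv w x =
      6 / (1 - f x) ^ 4 * (innerGrad gInv f f x) ^ 2
      + 2 / (1 - f x) ^ 3 * laplaceBeltrami g gInv f x * innerGrad gInv f f x
      + 8 / (1 - f x) ^ 3 *
          (∑ i, ∑ j, hess g gInv f x i j * gradComp gInv f x i * gradComp gInv f x j)
      + 2 / (1 - f x) ^ 2 *
          (∑ i, ∑ j, ∑ a, ∑ b, gInv x i a * gInv x j b *
            hess g gInv f x i j * hess g gInv f x a b)
      + 2 / (1 - f x) ^ 2 * innerGrad gInv f (laplaceBeltrami g gInv f) x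
      + 2 / (1 - f x) ^ 2 *
          (∑ i, ∑ j, ricci g gInv x i j * gradComp gInv f x i * gradComp gInv f x j) := by
  have hne : 1 - f x ≠ 0 := sub_ne_zero.mpr hx.symm
  have hw' : w = fun y => innerGrad gInv f f y * (1 - f y) ^ (-2 : ℤ) :=
    funext fun y => by rw [hw, div_eq_mul_inv, zpow_neg]; rfl
  have hφ : ContDiffAt ℝ 2 (fun t : ℝ => (1 - t) ^ (-2 : ℤ)) (f x) := by
    simp only [zpow_neg]
    exact ((contDiffAt_const.sub contDiffAt_id).pow 2).inv (pow_ne_zero 2 hne)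
  have hφ' : deriv (fun t : ℝ => (1 - t) ^ (-2 : ℤ)) (f x) = 2 / (1 - f x) ^ 3 := by
    rw [deriv_one_sub_zpow]
    norm_num [zpow_neg, div_eq_mul_inv]
  have hφ'' : deriv (deriv fun t : ℝ => (1 - t) ^ (-2 : ℤ)) (f x) = 6 / (1 - f x) ^ 4 := by
    rw [deriv_one_sub_zpow, deriv_const_mul_field', deriv_one_sub_zpow]
    norm_num [zpow_neg, div_eq_mul_inv, ← mul_assoc]
  rw [hw', laplaceBeltrami_innerGrad_self_mul_comp hM hf.contDiffAt hφ, hφ', hφ'',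
    laplaceBeltrami_innerGrad_self hM hf, zpow_neg, zpow_ofNat]
  ring

/-- for a smooth `f ≤ 0` on a Riemannian manifold (in local
coordinates, with metric `g` and Ricci curvature `Ric`) and `w = |∇f|²/(1-f)²`,
`Δw = 6/(1-f)⁴|∇f|⁴ + 2/(1-f)³(Δf)|∇f|² + 8/(1-f)³ Hess f(∇f,∇f)
   + 2/(1-f)²|Hess f|² + 2/(1-f)²⟨∇f, ∇(Δf)⟩ + 2/(1-f)² Ric(∇f,∇f)`. -/
theorem stmt_16 {n : ℕ} (g gInv : (Fin n → ℝ) → Matrix (Fin n) (Fin n) ℝ)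
    (hsymm : ∀ x, (g x).IsSymm) (hinv : ∀ x, g x * gInv x = 1)
    (hg : ∀ i j, ContDiff ℝ (⊤ : ℕ∞) (fun x => g x i j))
    (hgInv : ∀ i j, ContDiff ℝ (⊤ : ℕ∞) (fun x => gInv x i j))
    (f : (Fin n → ℝ) → ℝ) (hf : ContDiff ℝ (⊤ : ℕ∞) f) (hf0 : ∀ x, f x ≤ 0)
    (w : (Fin n → ℝ) → ℝ)
    (hw : ∀ x, w x = innerGrad gInv f f x / (1 - f x) ^ 2) :
    ∀ x, laplaceBeltrami g gInv w x =
      6 / (1 - f x) ^ 4 * (innerGrad gInv f f x) ^ 2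
      + 2 / (1 - f x) ^ 3 * laplaceBeltrami g gInv f x * innerGrad gInv f f x
      + 8 / (1 - f x) ^ 3 *
          (∑ i, ∑ j, hess g gInv f x i j * gradComp gInv f x i * gradComp gInv f x j)
      + 2 / (1 - f x) ^ 2 *
          (∑ i, ∑ j, ∑ a, ∑ b, gInv x i a * gInv x j b *
            hess g gInv f x i j * hess g gInv f x a b)
      + 2 / (1 - f x) ^ 2 * innerGrad gInv f (laplaceBeltrami g gInv f) x
      + 2 / (1 - f x) ^ 2 *
          (∑ i, ∑ j, ricci g gInv x i j * gradComp gInv f x i * gradComp gInv f x j) := by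
  have hM : IsMetricPair g gInv :=
    ⟨hsymm, hinv, fun i j => contDiff_infty.1 (hg i j) 2, fun i j => contDiff_infty.1 (hgInv i j) 2⟩
  exact fun x => stmt_16_general hM (contDiff_infty.1 hf 3) hw ((hf0 x).trans_lt one_pos).ne
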